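/- Let A, B, C ⊂ ℝ be compact sets with dim_H(A) + dim_H(B) + dim_H(C) > 2. Then the set A(B+C) = { a(b+c) : a ∈ A, b ∈ B, c ∈ C } ⊂ ℝ has positive one-dimensional Lebesgue measure. -/

import Mathlib

open MeasureTheory
open scoped ENNReal
open scoped FourierTransform ComplexConjugate

/-- The `s`-dimensional Hausdorff content on the real line. -/
noncomputable def hausdorffContent (s : ℝ) (hs : 0 < s) : OuterMeasure ℝ :=
  OuterMeasure.ofFunction (fun t => Metric.ediam t ^ s)
    (by simp [ENNReal.zero_rpow_of_pos hs])

theorem hausdorffContent_le_ediam {s : ℝ} (hs : 0 < s) (t : Set ℝ) :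
    hausdorffContent s hs t ≤ Metric.ediam t ^ s :=
  OuterMeasure.ofFunction_le t

theorem hausdorffMeasure_eq_zero_of_hausdorffContent {s : ℝ} (hs : 0 < s) {K : Set ℝ}
    (h : hausdorffContent s hs K = 0) : μH[s] K = 0 := by
  rw [Measure.hausdorffMeasure_apply]
  simp only [ENNReal.iSup_eq_zero]
  intro r hr
  refine le_antisymm (le_of_forall_gt fun ε hε => ?_) zero_le
  have hlt : hausdorffContent s hs K < min ε (r ^ s) := by
    rw [h]
    exact lt_min hε (ENNReal.rpow_pos_of_nonneg hr hs.le)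
  rw [hausdorffContent, OuterMeasure.ofFunction_apply] at hlt
  obtain ⟨t, ht⟩ := iInf_lt_iff.1 hlt
  obtain ⟨hKt, ht⟩ := iInf_lt_iff.1 ht
  have hdiam : ∀ n, Metric.ediam (t n) ≤ r := fun n => by
    rw [← ENNReal.rpow_le_rpow_iff hs]
    exact (ENNReal.le_tsum n).trans (ht.le.trans (min_le_right _ _))
  calc _ ≤ ∑' n, ⨆ _ : (t n).Nonempty, Metric.ediam (t n) ^ s :=
        iInf_le_of_le t (iInf_le_of_le hKt (iInf_le _ hdiam))
    _ ≤ ∑' n, Metric.ediam (t n) ^ s := ENNReal.tsum_le_tsum fun n => iSup_le fun _ => le_rfl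
    _ < ε := ht.trans_le (min_le_left _ _)

/-- **Frostman's lemma** on the real line. -/
theorem exists_frostman_measure {s : ℝ} (hs : 0 < s) {K : Set ℝ} (hK : IsCompact K)
    (hpos : μH[s] K ≠ 0) :
    ∃ μ : Measure ℝ, IsFiniteMeasure μ ∧ μ ≠ 0 ∧ μ Kᶜ = 0 ∧
      ∀ x r, 0 < r → μ (Metric.closedBall x r) ≤ ENNReal.ofReal (3 ^ s * r ^ s) := by
  set H := hausdorffContent s hs with hH
  obtain ⟨L, hL⟩ := hK.isBounded.subset_closedBall 0
  have hfin : ∀ t ⊆ K, H t ≠ ∞ := fun t ht =>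
    ((hausdorffContent_le_ediam hs t).trans_lt
      (ENNReal.rpow_lt_top_of_nonneg hs.le (hK.isBounded.subset ht).ediam_ne_top)).ne
  have hfin' : ∀ x, H (K ∩ Set.Iic x) ≠ ∞ := fun x => hfin _ Set.inter_subset_left
  have hmono : Monotone fun x => (H (K ∩ Set.Iic x)).toReal := fun x y hxy =>
    ENNReal.toReal_mono (hfin' y)
      (measure_mono (Set.inter_subset_inter_right _ (Set.Iic_subset_Iic.2 hxy)))
  have hsub : ∀ x y, x ≤ y → (H (K ∩ Set.Iic y)).toReal - (H (K ∩ Set.Iic x)).toReal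
      ≤ (H (K ∩ Set.Ioc x y)).toReal := fun x y hxy => by
    rw [sub_le_iff_le_add', ← ENNReal.toReal_add (hfin' x) (hfin _ Set.inter_subset_left)]
    refine ENNReal.toReal_mono (ENNReal.add_ne_top.2 ⟨hfin' x, hfin _ Set.inter_subset_left⟩) ?_
    refine le_trans (measure_mono ?_) (measure_union_le _ _)
    rw [← Set.inter_union_distrib_left, Set.Iic_union_Ioc_eq_Iic hxy]
  have hholder : ∀ x y, x ≤ y → (H (K ∩ Set.Iic y)).toReal - (H (K ∩ Set.Iic x)).toReal
      ≤ (y - x) ^ s := fun x y hxy => by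
    refine (hsub x y hxy).trans (ENNReal.toReal_le_of_le_ofReal (by
      have := sub_nonneg.2 hxy
      positivity) ?_)
    refine (measure_mono Set.inter_subset_right).trans ((hausdorffContent_le_ediam hs _).trans ?_)
    rw [Real.ediam_Ioc, ENNReal.ofReal_rpow_of_nonneg (sub_nonneg.2 hxy) hs.le]
  let F : StieltjesFunction ℝ :=
    { toFun := fun x => (H (K ∩ Set.Iic x)).toReal
      mono' := hmono
      right_continuous' := fun x => by
        have h1 : Filter.Tendsto (fun y => (H (K ∩ Set.Iic x)).toReal + (y - x) ^ s)
            (nhdsWithin x (Set.Ici x)) (nhds (H (K ∩ Set.Iic x)).toReal) := by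
          have : ContinuousAt (fun y : ℝ => (H (K ∩ Set.Iic x)).toReal + (y - x) ^ s) x :=
            continuousAt_const.add
              ((continuousAt_id.sub continuousAt_const).rpow_const (Or.inr hs.le))
          have h2 := this.tendsto.mono_left (nhdsWithin_le_nhds (s := Set.Ici x))
          simpa [Real.zero_rpow hs.ne'] using h2
        refine tendsto_of_tendsto_of_tendsto_of_le_of_le' tendsto_const_nhds h1 ?_ ?_
        · filter_upwards [self_mem_nhdsWithin] with y hy using hmono hy
        · filter_upwards [self_mem_nhdsWithin] with y hy
          linarith [hholder x y hy] }
  have hF : ∀ x, F x = (H (K ∩ Set.Iic x)).toReal := fun x => rfl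
  have hcompl : F.measure Kᶜ = 0 := by
    refine measure_null_of_locally_null _ fun x hx => ?_
    obtain ⟨ε, hε, hball⟩ := Metric.isOpen_iff.1 hK.isClosed.isOpen_compl x hx
    refine ⟨Set.Ioc (x - ε / 2) (x + ε / 2), mem_nhdsWithin_of_mem_nhds
      (Ioc_mem_nhds (by linarith) (by linarith)), ?_⟩
    rw [StieltjesFunction.measure_Ioc, ENNReal.ofReal_eq_zero, hF, hF]
    refine (hsub _ _ (by linarith)).trans ?_
    have : K ∩ Set.Ioc (x - ε / 2) (x + ε / 2) = ∅ := by
      rw [← Set.disjoint_iff_inter_eq_empty, Set.disjoint_left]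
      intro y hy hy'
      refine hball ?_ hy
      rw [Metric.mem_ball, Real.dist_eq, abs_lt]
      constructor <;> linarith [hy'.1, hy'.2]
    simp [this]
  have hKsub : K ⊆ Set.Ioc (-L - 1) L := fun y hy => by
    have := hL hy
    rw [Metric.mem_closedBall, Real.dist_eq, sub_zero, abs_le] at this
    exact ⟨by linarith [this.1], this.2⟩
  have huniv : F.measure Set.univ ≤ F.measure (Set.Ioc (-L - 1) L) := by
    rw [← Set.union_compl_self K]
    refine (measure_union_le _ _).trans ?_
    rw [hcompl, add_zero]
    exact measure_mono hKsub
  refine ⟨F.measure, ⟨?_⟩, fun h0 => hpos ?_, hcompl, fun x r hr => ?_⟩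
  · refine huniv.trans_lt ?_
    rw [StieltjesFunction.measure_Ioc]
    exact ENNReal.ofReal_lt_top
  · have h1 : F.measure (Set.Ioc (-L - 1) L) = 0 := by rw [h0]; rfl
    rw [StieltjesFunction.measure_Ioc, ENNReal.ofReal_eq_zero, hF, hF,
      Set.inter_eq_left.2 (hKsub.trans Set.Ioc_subset_Iic_self),
      (Set.disjoint_iff_inter_eq_empty.1 (Set.disjoint_left.2 fun y hy hy' =>
        absurd (hKsub hy).1 (not_lt.2 hy')) : K ∩ Set.Iic (-L - 1) = ∅)] at h1
    have h2 : (H K).toReal = 0 := le_antisymm (by simpa using h1) ENNReal.toReal_nonneg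
    rw [ENNReal.toReal_eq_zero_iff] at h2
    exact hausdorffMeasure_eq_zero_of_hausdorffContent hs
      (h2.resolve_right (hfin K subset_rfl))
  · have hincl : Metric.closedBall x r ⊆ Set.Ioc (x - 2 * r) (x + r) := by
      rw [Real.closedBall_eq_Icc]
      exact fun y hy => ⟨by linarith [hy.1], hy.2⟩
    refine (measure_mono hincl).trans ?_
    rw [StieltjesFunction.measure_Ioc, hF, hF, ← Real.mul_rpow (by norm_num) hr.le]
    refine ENNReal.ofReal_le_ofReal ((hholder _ _ (by linarith)).trans_eq ?_)
    congr 1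
    ring

theorem lintegral_gaussian_le_of_frostman {μ : Measure ℝ} {s c : ℝ} (hs1 : s ≤ 1)
    (hc : 0 ≤ c)
    (hμ : ∀ x r, 0 < r → μ (Metric.closedBall x r) ≤ ENNReal.ofReal (c * r ^ s)) :
    ∃ K : ℝ≥0∞, K ≠ ∞ ∧ ∀ R, 0 < R → ∀ x,
      ∫⁻ y, ENNReal.ofReal (Real.exp (-Real.pi * R ^ 2 * (x - y) ^ 2)) ∂μ
        ≤ K * ENNReal.ofReal (R ^ (-s)) := by
  refine ⟨∑' n : ℕ, ENNReal.ofReal (Real.exp (-n) * (c * (n + 1))), ?_, fun R hR x => ?_⟩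
  · have h1 := Real.summable_pow_mul_exp_neg_nat_mul 1 one_pos
    have h0 := Real.summable_pow_mul_exp_neg_nat_mul 0 one_pos
    have hsum : Summable fun n : ℕ => Real.exp (-n) * (c * (n + 1)) := by
      refine ((h1.add h0).mul_left c).congr fun n => ?_
      simp only [pow_one, pow_zero, neg_mul, one_mul]
      ring
    rw [← ENNReal.ofReal_tsum_of_nonneg (fun n => by positivity) hsum]
    exact ENNReal.ofReal_ne_top
  · calc ∫⁻ y, ENNReal.ofReal (Real.exp (-Real.pi * R ^ 2 * (x - y) ^ 2)) ∂μ
        ≤ ∫⁻ y, ∑' n : ℕ, (Metric.closedBall x ((n + 1) / R)).indicator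
            (fun _ => ENNReal.ofReal (Real.exp (-n))) y ∂μ := by
          refine lintegral_mono fun y => ?_
          set n := ⌊R * |x - y|⌋₊ with hn
          have hv : 0 ≤ R * |x - y| := by positivity
          have hn1 : (n : ℝ) ≤ R * |x - y| := Nat.floor_le hv
          have hn2 : R * |x - y| < n + 1 := Nat.lt_floor_add_one _
          refine le_trans ?_ (ENNReal.le_tsum n)
          rw [Set.indicator_of_mem]
          · refine ENNReal.ofReal_le_ofReal (Real.exp_le_exp.2 ?_)
            have h1 : (n : ℝ) ≤ n ^ 2 := by exact_mod_cast Nat.le_self_pow two_ne_zero n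
            have h2 : (n : ℝ) ^ 2 ≤ (R * |x - y|) ^ 2 := by gcongr
            rw [mul_pow, sq_abs] at h2
            nlinarith [Real.pi_gt_three, mul_nonneg (sq_nonneg R) (sq_nonneg (x - y))]
          · rw [Metric.mem_closedBall, dist_comm, Real.dist_eq, le_div_iff₀ hR]
            linarith
      _ = ∑' n : ℕ, ENNReal.ofReal (Real.exp (-n)) * μ (Metric.closedBall x ((n + 1) / R)) := by
          rw [lintegral_tsum fun n =>
            (measurable_const.indicator Metric.isClosed_closedBall.measurableSet).aemeasurable]
          refine tsum_congr fun n => ?_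
          rw [lintegral_indicator_const Metric.isClosed_closedBall.measurableSet]
      _ ≤ ∑' n : ℕ, ENNReal.ofReal (Real.exp (-n) * (c * (n + 1))) *
            ENNReal.ofReal (R ^ (-s)) := by
          refine ENNReal.tsum_le_tsum fun n => ?_
          refine (mul_le_mul_right (hμ x _ (by positivity)) _).trans ?_
          rw [← ENNReal.ofReal_mul (by positivity), ← ENNReal.ofReal_mul (by positivity)]
          refine ENNReal.ofReal_le_ofReal ?_
          rw [Real.div_rpow (by positivity) hR.le, Real.rpow_neg hR.le, div_eq_mul_inv]
          have h1 : ((n : ℝ) + 1) ^ s ≤ n + 1 :=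
            (Real.rpow_le_rpow_of_exponent_le (by simp) hs1).trans_eq (Real.rpow_one _)
          calc Real.exp (-n) * (c * (((n : ℝ) + 1) ^ s * (R ^ s)⁻¹))
              ≤ Real.exp (-n) * (c * ((n + 1) * (R ^ s)⁻¹)) := by gcongr
            _ = _ := by ring
      _ = _ := ENNReal.tsum_mul_right

/-- The Fourier transform of the complex measure with density `h` with respect to `μ`. -/
noncomputable def densityFourier (μ : Measure ℝ) (h : ℝ → ℂ) (u : ℝ) : ℂ :=
  ∫ x, (𝐞 (u * x) : ℂ) * h x ∂μ

theorem continuous_fourierChar_coe : Continuous fun x : ℝ => (𝐞 x : ℂ) :=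
  continuous_subtype_val.comp Real.continuous_fourierChar

theorem continuous_densityFourier {μ : Measure ℝ} [IsFiniteMeasure μ] {h : ℝ → ℂ} {M : ℝ}
    (hh : Measurable h) (hM : ∀ x, ‖h x‖ ≤ M) : Continuous (densityFourier μ h) := by
  refine continuous_of_dominated (bound := fun _ => M) (fun u => ?_)
    (fun u => Filter.Eventually.of_forall fun x => ?_) (integrable_const M)
    (Filter.Eventually.of_forall fun x => ?_)
  · exact ((continuous_fourierChar_coe.comp (by fun_prop)).measurable.mul hh).aestronglyMeasurable
  · rw [norm_mul, Circle.norm_coe, one_mul]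
    exact hM x
  · exact (continuous_fourierChar_coe.comp (by fun_prop)).mul continuous_const

theorem norm_densityFourier_le {μ : Measure ℝ} [IsFiniteMeasure μ] {h : ℝ → ℂ} {M : ℝ}
    (hM : ∀ x, ‖h x‖ ≤ M) (u : ℝ) : ‖densityFourier μ h u‖ ≤ M * μ.real Set.univ :=
  norm_integral_le_of_norm_le_const (Filter.Eventually.of_forall fun x => by
    rw [norm_mul, Circle.norm_coe, one_mul]
    exact hM x)

theorem integral_gaussian_mul_fourierChar {R : ℝ} (hR : 0 < R) (v : ℝ) :
    ∫ u : ℝ, (Real.exp (-Real.pi * (u / R) ^ 2) : ℂ) * (𝐞 (u * v) : ℂ)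
      = (R * Real.exp (-Real.pi * R ^ 2 * v ^ 2) : ℝ) := by
  have hb : 0 < ((Real.pi / R ^ 2 : ℝ) : ℂ).re := by
    rw [Complex.ofReal_re]
    positivity
  have hR' : (R : ℂ) ≠ 0 := by exact_mod_cast hR.ne'
  have hpi : (Real.pi : ℂ) ≠ 0 := by exact_mod_cast Real.pi_ne_zero
  have key := fourierIntegral_gaussian hb (2 * Real.pi * v : ℂ)
  have hroot : ((Real.pi : ℂ) / ((Real.pi / R ^ 2 : ℝ) : ℂ)) ^ (1 / 2 : ℂ) = R := by
    have h1 : (Real.pi : ℂ) / ((Real.pi / R ^ 2 : ℝ) : ℂ) = ((R ^ 2 : ℝ) : ℂ) := by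
      push_cast
      field_simp
    have h2 : (1 / 2 : ℂ) = ((1 / 2 : ℝ) : ℂ) := by push_cast; ring
    rw [h1, h2, ← Complex.ofReal_cpow (by positivity), ← Real.sqrt_eq_rpow, Real.sqrt_sq hR.le]
  rw [hroot] at key
  rw [Complex.ofReal_mul, Complex.ofReal_exp]
  convert key using 1
  · congr 1
    ext u
    rw [Real.fourierChar_apply, mul_comm, Complex.ofReal_exp]
    congr 2 <;> push_cast <;> field_simp
  · congr 2
    push_cast
    field_simp
    ring

theorem integrable_gaussian_scale {R : ℝ} (hR : 0 < R) :
    Integrable fun u : ℝ => Real.exp (-Real.pi * (u / R) ^ 2) :=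
  (integrable_exp_neg_mul_sq (b := Real.pi / R ^ 2) (by positivity)).congr
    (Filter.Eventually.of_forall fun u => by
      dsimp only
      congr 1
      field_simp)

/-- The Gaussian average of the squared Fourier transform as a double integral. -/
theorem integral_gaussian_mul_norm_sq_densityFourier {μ : Measure ℝ} [IsFiniteMeasure μ]
    {h : ℝ → ℂ} {M : ℝ} (hh : Measurable h) (hM : ∀ x, ‖h x‖ ≤ M) {R : ℝ} (hR : 0 < R) :
    ((∫ u, Real.exp (-Real.pi * (u / R) ^ 2) * ‖densityFourier μ h u‖ ^ 2 : ℝ) : ℂ)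
      = ∫ p : ℝ × ℝ, (h p.1 * conj (h p.2)) *
          (R * Real.exp (-Real.pi * R ^ 2 * (p.1 - p.2) ^ 2) : ℝ) ∂(μ.prod μ) := by
  have hM0 : 0 ≤ M := (norm_nonneg _).trans (hM 0)
  let Φ : ℝ → ℝ × ℝ → ℂ := fun u p =>
    (h p.1 * conj (h p.2)) *
      ((Real.exp (-Real.pi * (u / R) ^ 2) : ℂ) * (𝐞 (u * (p.1 - p.2)) : ℂ))
  have hsq : ∀ u, ((Real.exp (-Real.pi * (u / R) ^ 2) * ‖densityFourier μ h u‖ ^ 2 : ℝ) : ℂ)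
      = ∫ p, Φ u p ∂(μ.prod μ) := fun u => by
    have h1 : ((‖densityFourier μ h u‖ ^ 2 : ℝ) : ℂ)
        = densityFourier μ h u * conj (densityFourier μ h u) := by
      rw [Complex.mul_conj, Complex.normSq_eq_norm_sq]
    rw [Complex.ofReal_mul, h1]
    conv_lhs => rw [densityFourier, ← integral_conj, ← integral_prod_mul, ← integral_const_mul]
    refine integral_congr_ae (Filter.Eventually.of_forall fun p => ?_)
    have h2 : (𝐞 (u * (p.1 - p.2)) : ℂ) = 𝐞 (u * p.1) * conj (𝐞 (u * p.2) : ℂ) := by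
      rw [mul_sub, sub_eq_add_neg, AddChar.map_add_eq_mul, AddChar.map_neg_eq_inv, Circle.coe_mul,
        Circle.coe_inv_eq_conj]
    simp only [Φ, h2, map_mul]
    ring
  have hint : Integrable (Function.uncurry Φ) (volume.prod (μ.prod μ)) := by
    refine Integrable.mono' (g := fun z : ℝ × ℝ × ℝ => Real.exp (-Real.pi * (z.1 / R) ^ 2) *
      (M * M)) ((integrable_gaussian_scale hR).mul_prod (integrable_const (M * M))) ?_ ?_
    · refine Measurable.aestronglyMeasurable ?_
      have he : Measurable fun z : ℝ × ℝ × ℝ => (𝐞 (z.1 * (z.2.1 - z.2.2)) : ℂ) :=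
        (continuous_fourierChar_coe.comp (by fun_prop)).measurable
      have hc : Measurable fun z : ℝ × ℝ × ℝ => conj (h z.2.2) :=
        Complex.continuous_conj.measurable.comp (hh.comp (by fun_prop))
      exact ((hh.comp (by fun_prop)).mul hc).mul (Measurable.mul (by fun_prop) he)
    · refine Filter.Eventually.of_forall fun z => ?_
      simp only [Function.uncurry, Φ, norm_mul, Circle.norm_coe, mul_one, RCLike.norm_conj,
        Complex.norm_real, Real.norm_eq_abs, Real.abs_exp]
      rw [mul_comm]
      gcongr
      exacts [hM _, hM _]
  rw [← integral_complex_ofReal]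
  simp_rw [hsq]
  rw [integral_integral_swap hint]
  refine integral_congr_ae (Filter.Eventually.of_forall fun p => ?_)
  simp only [Φ]
  rw [integral_const_mul, integral_gaussian_mul_fourierChar hR]

/-- Mean square decay of the Fourier transform of a Frostman measure. -/
theorem lintegral_ball_densityFourier_sq_le {μ : Measure ℝ} [IsFiniteMeasure μ] {s c : ℝ}
    (hs1 : s ≤ 1) (hc : 0 ≤ c)
    (hμ : ∀ x r, 0 < r → μ (Metric.closedBall x r) ≤ ENNReal.ofReal (c * r ^ s))
    {h : ℝ → ℂ} {M : ℝ} (hh : Measurable h) (hM : ∀ x, ‖h x‖ ≤ M) :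
    ∃ K : ℝ≥0∞, K ≠ ∞ ∧ ∀ R, 0 < R →
      ∫⁻ u in Metric.closedBall 0 R, ‖densityFourier μ h u‖ₑ ^ 2
        ≤ K * ENNReal.ofReal (R ^ (1 - s)) := by
  obtain ⟨K, hK, hKle⟩ := lintegral_gaussian_le_of_frostman hs1 hc hμ
  have hM0 : 0 ≤ M := (norm_nonneg _).trans (hM 0)
  refine ⟨ENNReal.ofReal (Real.exp Real.pi) * (ENNReal.ofReal (M * M) * (K * μ Set.univ)), ?_,
    fun R hR => ?_⟩
  · exact ENNReal.mul_ne_top ENNReal.ofReal_ne_top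
      (ENNReal.mul_ne_top ENNReal.ofReal_ne_top (ENNReal.mul_ne_top hK (measure_ne_top _ _)))
  have hcont := continuous_densityFourier (μ := μ) hh hM
  have hint : Integrable fun u =>
      Real.exp (-Real.pi * (u / R) ^ 2) * ‖densityFourier μ h u‖ ^ 2 := by
    refine (integrable_gaussian_scale hR).mul_bdd (c := (M * μ.real Set.univ) ^ 2)
      (hcont.norm.pow 2).aestronglyMeasurable (Filter.Eventually.of_forall fun u => ?_)
    rw [norm_pow, norm_norm]
    exact pow_le_pow_left₀ (norm_nonneg _) (norm_densityFourier_le hM u) 2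
  have hgauss : ENNReal.ofReal (∫ u, Real.exp (-Real.pi * (u / R) ^ 2) *
      ‖densityFourier μ h u‖ ^ 2)
      ≤ ENNReal.ofReal (M * M) * (K * μ Set.univ) * ENNReal.ofReal (R ^ (1 - s)) := by
    rw [← abs_of_nonneg (integral_nonneg fun u => by positivity), ← Real.norm_eq_abs,
      ← Complex.norm_real, ofReal_norm, integral_gaussian_mul_norm_sq_densityFourier hh hM hR]
    calc _ ≤ ∫⁻ p : ℝ × ℝ, ENNReal.ofReal (M * M * R) *
            ENNReal.ofReal (Real.exp (-Real.pi * R ^ 2 * (p.1 - p.2) ^ 2)) ∂(μ.prod μ) := by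
          refine (enorm_integral_le_lintegral_enorm _).trans (lintegral_mono fun p => ?_)
          rw [← ENNReal.ofReal_mul (by positivity), ← ofReal_norm]
          refine ENNReal.ofReal_le_ofReal ?_
          rw [norm_mul, norm_mul, RCLike.norm_conj, Complex.norm_real, Real.norm_eq_abs,
            abs_of_nonneg (by positivity), ← mul_assoc]
          gcongr
          exacts [hM _, hM _]
      _ = ENNReal.ofReal (M * M * R) * ∫⁻ x, ∫⁻ y,
            ENNReal.ofReal (Real.exp (-Real.pi * R ^ 2 * (x - y) ^ 2)) ∂μ ∂μ := by
          rw [lintegral_const_mul _ (by fun_prop), lintegral_prod _ (by fun_prop)]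
      _ ≤ ENNReal.ofReal (M * M * R) * ∫⁻ x, K * ENNReal.ofReal (R ^ (-s)) ∂μ := by
          gcongr with x
          exact hKle R hR x
      _ = _ := by
          rw [lintegral_const, ENNReal.ofReal_mul (by positivity), sub_eq_add_neg,
            Real.rpow_add hR, Real.rpow_one, ENNReal.ofReal_mul hR.le]
          ring
  calc ∫⁻ u in Metric.closedBall 0 R, ‖densityFourier μ h u‖ₑ ^ 2
      ≤ ∫⁻ u in Metric.closedBall 0 R, ENNReal.ofReal (Real.exp Real.pi) *
          ENNReal.ofReal (Real.exp (-Real.pi * (u / R) ^ 2) * ‖densityFourier μ h u‖ ^ 2) := by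
        refine setLIntegral_mono' Metric.isClosed_closedBall.measurableSet fun u hu => ?_
        rw [← ENNReal.ofReal_mul (by positivity), ← ofReal_norm,
          ← ENNReal.ofReal_pow (norm_nonneg _), ← mul_assoc, ← Real.exp_add]
        refine ENNReal.ofReal_le_ofReal (le_mul_of_one_le_left (by positivity) ?_)
        rw [Real.one_le_exp_iff]
        rw [mem_closedBall_zero_iff, Real.norm_eq_abs] at hu
        have : (u / R) ^ 2 ≤ 1 := by
          rw [sq_le_one_iff_abs_le_one, abs_div, abs_of_pos hR]
          exact div_le_one_of_le₀ hu hR.le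
        nlinarith [Real.pi_pos]
    _ ≤ ∫⁻ u, ENNReal.ofReal (Real.exp Real.pi) *
          ENNReal.ofReal (Real.exp (-Real.pi * (u / R) ^ 2) * ‖densityFourier μ h u‖ ^ 2) :=
        setLIntegral_le_lintegral _ _
    _ = ENNReal.ofReal (Real.exp Real.pi) * ENNReal.ofReal (∫ u,
          Real.exp (-Real.pi * (u / R) ^ 2) * ‖densityFourier μ h u‖ ^ 2) := by
        rw [lintegral_const_mul' _ _ ENNReal.ofReal_ne_top,
          ofReal_integral_eq_lintegral_ofReal hint
            (Filter.Eventually.of_forall fun u => by positivity)]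
    _ ≤ _ := by
        rw [mul_assoc (ENNReal.ofReal (Real.exp Real.pi))]
        gcongr

theorem sq_lintegral_mul_le {α : Type*} [MeasurableSpace α] {μ : Measure α} {f g : α → ℝ≥0∞}
    (hf : AEMeasurable f μ) (hg : AEMeasurable g μ) :
    (∫⁻ x, f x * g x ∂μ) ^ 2 ≤ (∫⁻ x, f x ^ 2 ∂μ) * ∫⁻ x, g x ^ 2 ∂μ := by
  have h := ENNReal.lintegral_mul_le_Lp_mul_Lq μ Real.HolderConjugate.two_two hf hg
  have h2 := pow_le_pow_left' h 2
  rw [mul_pow, ← ENNReal.rpow_natCast, ← ENNReal.rpow_natCast, ← ENNReal.rpow_natCast,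
    ← ENNReal.rpow_mul, ← ENNReal.rpow_mul] at h2
  norm_num at h2
  exact h2

/-- The Fourier transform of a compactly supported measure is controlled at each point by the local
`L²` norm of the Fourier transform of a measure with bounded density. -/
theorem exists_density_densityFourier_sq_le {μ : Measure ℝ} [IsFiniteMeasure μ] {L : ℝ}
    (hL : 1 ≤ L) (hsupp : ∀ᵐ y ∂μ, |y| ≤ L) :
    ∃ (m : ℝ → ℂ) (M : ℝ), Measurable m ∧ (∀ y, ‖m y‖ ≤ M) ∧ ∀ x,
      ‖densityFourier μ 1 x‖ₑ ^ 2
        ≤ ∫⁻ u in Metric.closedBall x 1, ‖densityFourier μ m u‖ₑ ^ 2 := by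
  have hpi := Real.pi_gt_three
  set ρ : ℝ := (2 * Real.pi * L)⁻¹ with hρ
  have hρ0 : 0 < ρ := by positivity
  have hρ1 : 2 * ρ ≤ 1 := by
    rw [hρ, ← div_eq_mul_inv]
    refine div_le_one_of_le₀ ?_ (by positivity)
    nlinarith
  have hρL : 2 * Real.pi * ρ * L = 1 := by
    rw [hρ]
    field_simp
  let ν : Measure ℝ := volume.restrict (Metric.closedBall 0 ρ)
  have hνuniv : ν Set.univ = ENNReal.ofReal (2 * ρ) := by
    rw [Measure.restrict_apply_univ, Real.volume_closedBall]
  have : IsFiniteMeasure ν := ⟨by rw [hνuniv]; exact ENNReal.ofReal_lt_top⟩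
  have hνreal : ν.real Set.univ = 2 * ρ := by
    rw [Measure.real, hνuniv, ENNReal.toReal_ofReal (by positivity)]
  have hkcont : Continuous (densityFourier ν 1) :=
    continuous_densityFourier (M := 1) measurable_one (by simp)
  have hk : ∀ y, |y| ≤ L → ρ ≤ ‖densityFourier ν 1 y‖ := fun y hy => by
    have hcts : Continuous fun w : ℝ => (𝐞 (y * w) : ℂ) * (1 : ℝ → ℂ) w :=
      (continuous_fourierChar_coe.comp (by fun_prop)).mul continuous_const
    have hint : Integrable (fun w : ℝ => (𝐞 (y * w) : ℂ) * (1 : ℝ → ℂ) w) ν :=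
      Integrable.of_bound hcts.aestronglyMeasurable 1
        (Filter.Eventually.of_forall fun w => by simp [Circle.norm_coe])
    refine le_trans ?_ (Complex.re_le_norm _)
    rw [densityFourier, ← RCLike.re_eq_complex_re, ← integral_re hint]
    calc ρ = ∫ w, (1 / 2 : ℝ) ∂ν := by
          rw [integral_const, hνreal, smul_eq_mul]
          ring
      _ ≤ _ := by
          refine integral_mono_ae (integrable_const _) hint.re ?_
          filter_upwards [ae_restrict_mem Metric.isClosed_closedBall.measurableSet] with w hw
          rw [mem_closedBall_zero_iff, Real.norm_eq_abs] at hw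
          rw [Pi.one_apply, mul_one, Real.fourierChar_apply, RCLike.re_eq_complex_re,
            Complex.exp_ofReal_mul_I_re]
          refine le_trans ?_ (Real.one_sub_sq_div_two_le_cos)
          have h1 : |2 * Real.pi * (y * w)| ≤ 1 := by
            rw [abs_mul, abs_of_pos (by positivity : 0 < 2 * Real.pi), abs_mul, ← hρL]
            calc 2 * Real.pi * (|y| * |w|) ≤ 2 * Real.pi * (L * ρ) := by gcongr
              _ = _ := by ring
          have h2 := (sq_le_one_iff_abs_le_one _).2 h1
          linarith
  have hS : MeasurableSet (Metric.closedBall (0 : ℝ) L) :=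
    Metric.isClosed_closedBall.measurableSet
  let m : ℝ → ℂ := (Metric.closedBall 0 L).indicator fun y => (densityFourier ν 1 y)⁻¹
  have hm : Measurable m := hkcont.measurable.inv.indicator hS
  have hmM : ∀ y, ‖m y‖ ≤ ρ⁻¹ := fun y => by
    by_cases hy : y ∈ Metric.closedBall (0 : ℝ) L
    · simp only [m, Set.indicator_of_mem hy, norm_inv]
      rw [mem_closedBall_zero_iff, Real.norm_eq_abs] at hy
      exact inv_anti₀ hρ0 (hk y hy)
    · simp only [m, Set.indicator_of_notMem hy, norm_zero]
      positivity
  refine ⟨m, ρ⁻¹, hm, hmM, fun x => ?_⟩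
  have hGcont := continuous_densityFourier (μ := μ) hm hmM
  have hrepr : densityFourier μ 1 x = ∫ w, densityFourier μ m (x + w) ∂ν := by
    have hint : Integrable (Function.uncurry fun w y : ℝ => (𝐞 ((x + w) * y) : ℂ) * m y)
        (ν.prod μ) := by
      refine Integrable.of_bound (C := ρ⁻¹) (Measurable.aestronglyMeasurable ?_)
        (Filter.Eventually.of_forall fun z => ?_)
      · have he : Measurable fun z : ℝ × ℝ => (𝐞 ((x + z.1) * z.2) : ℂ) :=
          (continuous_fourierChar_coe.comp (by fun_prop)).measurable
        exact he.mul (hm.comp measurable_snd)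
      · simp only [Function.uncurry]
        rw [norm_mul, Circle.norm_coe, one_mul]
        exact hmM _
    simp only [densityFourier]
    rw [integral_integral_swap hint]
    refine integral_congr_ae ?_
    filter_upwards [hsupp] with y hy
    have hy' : y ∈ Metric.closedBall (0 : ℝ) L := by
      rwa [mem_closedBall_zero_iff, Real.norm_eq_abs]
    have h0 : densityFourier ν 1 y ≠ 0 := norm_pos_iff.1 (hρ0.trans_le (hk y hy))
    calc (𝐞 (x * y) : ℂ) * (1 : ℝ → ℂ) y
        = (𝐞 (x * y) : ℂ) * m y * densityFourier ν 1 y := by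
          simp only [m, Set.indicator_of_mem hy', Pi.one_apply]
          rw [mul_assoc, inv_mul_cancel₀ h0]
      _ = ∫ w, (𝐞 (x * y) : ℂ) * m y * ((𝐞 (y * w) : ℂ) * (1 : ℝ → ℂ) w) ∂ν := by
          rw [integral_const_mul, densityFourier]
      _ = _ := by
          refine integral_congr_ae (Filter.Eventually.of_forall fun w => ?_)
          simp only [Pi.one_apply, mul_one]
          rw [add_mul, AddChar.map_add_eq_mul, Circle.coe_mul, mul_comm w y]
          ring
  have hmeas : Measurable fun u => ‖densityFourier μ m u‖ₑ ^ 2 :=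
    (hGcont.measurable.enorm).pow_const 2
  calc ‖densityFourier μ 1 x‖ₑ ^ 2
      ≤ (∫⁻ w, 1 * ‖densityFourier μ m (x + w)‖ₑ ∂ν) ^ 2 := by
        rw [hrepr]
        simp only [one_mul]
        gcongr
        exact enorm_integral_le_lintegral_enorm _
    _ ≤ (∫⁻ w, 1 ^ 2 ∂ν) * ∫⁻ w, ‖densityFourier μ m (x + w)‖ₑ ^ 2 ∂ν :=
        sq_lintegral_mul_le aemeasurable_const
          ((hGcont.measurable.comp (measurable_const_add x)).enorm.aemeasurable)
    _ ≤ ∫⁻ w, ‖densityFourier μ m (x + w)‖ₑ ^ 2 ∂ν := by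
        rw [one_pow, lintegral_one, hνuniv]
        exact mul_le_of_le_one_left' (ENNReal.ofReal_le_one.2 hρ1)
    _ ≤ ∫⁻ w, (Metric.closedBall x 1).indicator
          (fun u => ‖densityFourier μ m u‖ₑ ^ 2) (x + w) := by
        simp only [ν]
        rw [← lintegral_indicator Metric.isClosed_closedBall.measurableSet]
        refine lintegral_mono fun w => ?_
        refine Set.indicator_le' (g := fun w => (Metric.closedBall x 1).indicator
          (fun u => ‖densityFourier μ m u‖ₑ ^ 2) (x + w)) (fun w hw => ?_) (fun _ _ => zero_le) w
        rw [mem_closedBall_zero_iff] at hw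
        rw [Set.indicator_of_mem]
        rw [Metric.mem_closedBall, dist_eq_norm, add_sub_cancel_left]
        linarith
    _ = _ := by
        rw [lintegral_add_left_eq_self
          (fun u => (Metric.closedBall x 1).indicator (fun u => ‖densityFourier μ m u‖ₑ ^ 2) u) x,
          lintegral_indicator Metric.isClosed_closedBall.measurableSet]

/-- Averages of the squared Fourier transform of a Frostman measure over dilations drawn from
another Frostman measure. -/
theorem lintegral_dilate_densityFourier_sq_le {μ ν : Measure ℝ} [IsFiniteMeasure μ]
    [IsFiniteMeasure ν] {α β c d L : ℝ} (hβ1 : β ≤ 1) (hd : 0 ≤ d) (hL : 1 ≤ L)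
    (hμ : ∀ x r, 0 < r → μ (Metric.closedBall x r) ≤ ENNReal.ofReal (c * r ^ α))
    (hν : ∀ x r, 0 < r → ν (Metric.closedBall x r) ≤ ENNReal.ofReal (d * r ^ β))
    (hμL : ∀ᵐ a ∂μ, |a| ≤ L) (hνL : ∀ᵐ y ∂ν, |y| ≤ L) :
    ∃ K : ℝ≥0∞, K ≠ ∞ ∧ ∀ ξ : ℝ, 1 ≤ |ξ| →
      ∫⁻ a, ‖densityFourier ν 1 (a * ξ)‖ₑ ^ 2 ∂μ ≤ K * ENNReal.ofReal (|ξ| ^ (1 - α - β)) := by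
  obtain ⟨m, M, hm, hmM, hle⟩ := exists_density_densityFourier_sq_le hL hνL
  obtain ⟨K, hK, hKle⟩ := lintegral_ball_densityFourier_sq_le hβ1 hd hν hm hmM
  set G : ℝ → ℝ≥0∞ := fun u => ‖densityFourier ν m u‖ₑ ^ 2 with hGdef
  have hG : Measurable G := (continuous_densityFourier hm hmM).measurable.enorm.pow_const 2
  refine ⟨K * ENNReal.ofReal ((L + 1) ^ (1 - β)) * ENNReal.ofReal c,
    ENNReal.mul_ne_top (ENNReal.mul_ne_top hK ENNReal.ofReal_ne_top) ENNReal.ofReal_ne_top,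
    fun ξ hξ => ?_⟩
  have hξ0 : 0 < |ξ| := by linarith
  have hξne : ξ ≠ 0 := abs_pos.1 hξ0
  let S : Set (ℝ × ℝ) := {z | |z.2 - z.1 * ξ| ≤ 1}
  have hS : MeasurableSet S :=
    (isClosed_le (f := fun z : ℝ × ℝ => |z.2 - z.1 * ξ|) (by fun_prop)
      continuous_const).measurableSet
  have hSu : ∀ u, MeasurableSet {a : ℝ | |u - a * ξ| ≤ 1} := fun u =>
    (isClosed_le (f := fun a : ℝ => |u - a * ξ|) (by fun_prop) continuous_const).measurableSet
  calc ∫⁻ a, ‖densityFourier ν 1 (a * ξ)‖ₑ ^ 2 ∂μ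
      ≤ ∫⁻ a, ∫⁻ u, S.indicator (fun z => G z.2) (a, u) ∂volume ∂μ := by
        refine lintegral_mono fun a => (hle (a * ξ)).trans_eq ?_
        rw [← lintegral_indicator Metric.isClosed_closedBall.measurableSet]
        rfl
    _ = ∫⁻ u, ∫⁻ a, S.indicator (fun z => G z.2) (a, u) ∂μ ∂volume :=
        lintegral_lintegral_swap
          (((hG.comp measurable_snd).indicator hS).aemeasurable)
    _ = ∫⁻ u, G u * μ {a | |u - a * ξ| ≤ 1} := by
        refine lintegral_congr fun u => ?_
        rw [← lintegral_indicator_const (hSu u)]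
        rfl
    _ ≤ ∫⁻ u, (Metric.closedBall 0 ((L + 1) * |ξ|)).indicator G u *
          ENNReal.ofReal (c * (1 / |ξ|) ^ α) := by
        refine lintegral_mono fun u => ?_
        by_cases hu : u ∈ Metric.closedBall (0 : ℝ) ((L + 1) * |ξ|)
        · dsimp only
          rw [Set.indicator_of_mem hu]
          gcongr
          refine (measure_mono fun a ha => ?_).trans (hμ (u / ξ) (1 / |ξ|) (by positivity))
          have ha' : |u - a * ξ| ≤ 1 := ha
          rw [Metric.mem_closedBall, dist_comm, Real.dist_eq, le_div_iff₀ hξ0, ← abs_mul, sub_mul,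
            div_mul_cancel₀ _ hξne]
          exact ha'
        · have h0 : μ {a | |u - a * ξ| ≤ 1} = 0 := by
            refine measure_mono_null (fun a ha => ?_) hμL
            have ha' : |u - a * ξ| ≤ 1 := ha
            rw [mem_closedBall_zero_iff, Real.norm_eq_abs, not_le] at hu
            intro haL
            have h1 : |u| - |a * ξ| ≤ |u - a * ξ| := abs_sub_abs_le_abs_sub _ _
            have haL' : |a| ≤ L := haL
            rw [abs_mul] at h1
            nlinarith
          simp [h0]
    _ = (∫⁻ u in Metric.closedBall 0 ((L + 1) * |ξ|), G u) *
          ENNReal.ofReal (c * (1 / |ξ|) ^ α) := by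
        rw [lintegral_mul_const' _ _ ENNReal.ofReal_ne_top,
          lintegral_indicator Metric.isClosed_closedBall.measurableSet]
    _ ≤ K * ENNReal.ofReal (((L + 1) * |ξ|) ^ (1 - β)) *
          ENNReal.ofReal (c * (1 / |ξ|) ^ α) := by
        gcongr
        exact hKle _ (by positivity)
    _ = _ := by
        have h1 : |ξ| ^ (1 - α - β) = |ξ| ^ (1 - β) * (1 / |ξ|) ^ α := by
          rw [one_div, Real.inv_rpow hξ0.le, ← Real.rpow_neg hξ0.le, ← Real.rpow_add hξ0]
          congr 1
          ring
        rw [Real.mul_rpow (by positivity) hξ0.le, h1, ENNReal.ofReal_mul (by positivity),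
          ENNReal.ofReal_mul' (p := c) (by positivity),
          ENNReal.ofReal_mul (p := |ξ| ^ (1 - β)) (by positivity)]
        ring

theorem lintegral_ball_comp_mul_le {g : ℝ → ℝ≥0∞} (hg : Measurable g) {a δ L R : ℝ} (hδ : 0 < δ)
    (ha : δ ≤ |a|) (haL : |a| ≤ L) :
    ∫⁻ ξ in Metric.closedBall 0 R, g (a * ξ)
      ≤ ENNReal.ofReal δ⁻¹ * ∫⁻ u in Metric.closedBall 0 (L * R), g u := by
  have ha0 : a ≠ 0 := abs_pos.1 (hδ.trans_le ha)
  have hball : ∀ r : ℝ, MeasurableSet (Metric.closedBall (0 : ℝ) r) := fun r =>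
    Metric.isClosed_closedBall.measurableSet
  calc ∫⁻ ξ in Metric.closedBall 0 R, g (a * ξ)
      ≤ ∫⁻ ξ, (Metric.closedBall 0 (L * R)).indicator g (a * ξ) := by
        rw [← lintegral_indicator (hball R)]
        refine lintegral_mono fun ξ => ?_
        refine Set.indicator_le' (g := fun ξ => (Metric.closedBall 0 (L * R)).indicator g (a * ξ))
          (fun ξ hξ => ?_) (fun _ _ => zero_le) ξ
        rw [mem_closedBall_zero_iff, Real.norm_eq_abs] at hξ
        rw [Set.indicator_of_mem]
        rw [mem_closedBall_zero_iff, Real.norm_eq_abs, abs_mul]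
        exact mul_le_mul haL hξ (abs_nonneg _) ((abs_nonneg a).trans haL)
    _ = ENNReal.ofReal |a⁻¹| * ∫⁻ u in Metric.closedBall 0 (L * R), g u := by
        rw [← lintegral_map (f := (Metric.closedBall 0 (L * R)).indicator g)
          (hg.indicator (hball _)) (measurable_const_mul a), Real.map_volume_mul_left ha0,
          lintegral_smul_measure, lintegral_indicator (hball _), smul_eq_mul]
    _ ≤ _ := by
        gcongr
        rw [abs_inv]
        exact inv_anti₀ hδ ha

/-- The `L²` bound on the Fourier transform of the product-sum of three Frostman measures. -/
theorem lintegral_sq_integral_dilate_mul_lt_top {μ ν τ : Measure ℝ} [IsFiniteMeasure μ]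
    [IsFiniteMeasure ν] [IsFiniteMeasure τ] {α β γ c d e δ L : ℝ}
    (hβ1 : β ≤ 1) (hγ1 : γ ≤ 1) (hsum : 2 < α + β + γ) (hd : 0 ≤ d) (he : 0 ≤ e)
    (hδ : 0 < δ) (hL : 1 ≤ L)
    (hμ : ∀ x r, 0 < r → μ (Metric.closedBall x r) ≤ ENNReal.ofReal (c * r ^ α))
    (hν : ∀ x r, 0 < r → ν (Metric.closedBall x r) ≤ ENNReal.ofReal (d * r ^ β))
    (hτ : ∀ x r, 0 < r → τ (Metric.closedBall x r) ≤ ENNReal.ofReal (e * r ^ γ))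
    (hμδ : ∀ᵐ a ∂μ, δ ≤ |a|) (hμL : ∀ᵐ a ∂μ, |a| ≤ L) (hνL : ∀ᵐ y ∂ν, |y| ≤ L) :
    ∫⁻ ξ, ‖∫ a, densityFourier ν 1 (a * ξ) * densityFourier τ 1 (a * ξ) ∂μ‖ₑ ^ 2 < ∞ := by
  obtain ⟨K, hK, hKle⟩ := lintegral_dilate_densityFourier_sq_le hβ1 hd hL hμ hν hμL hνL
  have hone : ∀ x : ℝ, ‖(1 : ℝ → ℂ) x‖ ≤ 1 := by simp
  obtain ⟨K', hK', hKle'⟩ := lintegral_ball_densityFourier_sq_le hγ1 he hτ measurable_one hone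
  have hνc : Continuous (densityFourier ν 1) := continuous_densityFourier measurable_one hone
  have hτc : Continuous (densityFourier τ 1) := continuous_densityFourier measurable_one hone
  set V : ℝ → ℂ := fun ξ => ∫ a, densityFourier ν 1 (a * ξ) * densityFourier τ 1 (a * ξ) ∂μ
    with hV
  set Q : ℝ → ℝ≥0∞ := fun ξ => ∫⁻ a, ‖densityFourier τ 1 (a * ξ)‖ₑ ^ 2 ∂μ with hQ
  have hVle : ∀ ξ, 1 ≤ |ξ| → ‖V ξ‖ₑ ^ 2 ≤ K * ENNReal.ofReal (|ξ| ^ (1 - α - β)) * Q ξ := by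
    intro ξ hξ
    calc ‖V ξ‖ₑ ^ 2 ≤ (∫⁻ a, ‖densityFourier ν 1 (a * ξ)‖ₑ *
            ‖densityFourier τ 1 (a * ξ)‖ₑ ∂μ) ^ 2 := by
          gcongr
          refine (enorm_integral_le_lintegral_enorm _).trans_eq ?_
          simp only [enorm_mul]
      _ ≤ (∫⁻ a, ‖densityFourier ν 1 (a * ξ)‖ₑ ^ 2 ∂μ) * Q ξ :=
          sq_lintegral_mul_le
            (hνc.comp (continuous_mul_const ξ)).measurable.enorm.aemeasurable
            (hτc.comp (continuous_mul_const ξ)).measurable.enorm.aemeasurable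
      _ ≤ _ := by
          gcongr
          exact hKle ξ hξ
  have hQle : ∀ R, 0 < R → ∫⁻ ξ in Metric.closedBall 0 R, Q ξ
      ≤ ENNReal.ofReal δ⁻¹ * K' * ENNReal.ofReal (L ^ (1 - γ)) * μ Set.univ *
        ENNReal.ofReal (R ^ (1 - γ)) := by
    intro R hR
    have hmeas : Measurable fun z : ℝ × ℝ => ‖densityFourier τ 1 (z.2 * z.1)‖ₑ ^ 2 :=
      (hτc.comp (by fun_prop : Continuous fun z : ℝ × ℝ => z.2 * z.1)).measurable.enorm.pow_const 2
    calc ∫⁻ ξ in Metric.closedBall 0 R, Q ξ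
        = ∫⁻ a, (∫⁻ ξ in Metric.closedBall 0 R, ‖densityFourier τ 1 (a * ξ)‖ₑ ^ 2) ∂μ :=
          lintegral_lintegral_swap hmeas.aemeasurable
      _ ≤ ∫⁻ a, ENNReal.ofReal δ⁻¹ * (K' * ENNReal.ofReal ((L * R) ^ (1 - γ))) ∂μ := by
          refine lintegral_mono_ae ?_
          filter_upwards [hμδ, hμL] with a ha haL
          refine (lintegral_ball_comp_mul_le (hτc.measurable.enorm.pow_const 2) hδ ha
            haL).trans ?_
          gcongr
          exact hKle' _ (by positivity)
      _ = _ := by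
          rw [lintegral_const, Real.mul_rpow (by positivity) hR.le,
            ENNReal.ofReal_mul (by positivity)]
          ring
  set D := ENNReal.ofReal δ⁻¹ * K' * ENNReal.ofReal (L ^ (1 - γ)) * μ Set.univ with hD
  have hDtop : D ≠ ∞ := ENNReal.mul_ne_top (ENNReal.mul_ne_top
    (ENNReal.mul_ne_top ENNReal.ofReal_ne_top hK') ENNReal.ofReal_ne_top) (measure_ne_top _ _)
  set q : ℝ := 2 ^ (2 - α - β - γ) with hq
  have hq0 : 0 < q := by positivity
  have hq1 : q < 1 := Real.rpow_lt_one_of_one_lt_of_neg (by norm_num) (by linarith)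
  let E : ℕ → Set ℝ := fun n => {ξ | 2 ^ n ≤ |ξ| ∧ |ξ| ≤ 2 ^ (n + 1)}
  have hE : ∀ n, MeasurableSet (E n) := fun n =>
    ((isClosed_le continuous_const continuous_abs).inter
      (isClosed_le continuous_abs continuous_const)).measurableSet
  have hEle : ∀ n, ∫⁻ ξ in E n, ‖V ξ‖ₑ ^ 2
      ≤ K * D * ENNReal.ofReal (2 ^ (1 - γ) * q ^ n) := by
    intro n
    have h2n : (0 : ℝ) < 2 ^ n := by positivity
    calc ∫⁻ ξ in E n, ‖V ξ‖ₑ ^ 2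
        ≤ ∫⁻ ξ in E n, K * ENNReal.ofReal ((2 ^ n) ^ (1 - α - β)) * Q ξ := by
          refine setLIntegral_mono' (hE n) fun ξ hξ => ?_
          refine (hVle ξ ((one_le_pow₀ (by norm_num)).trans hξ.1)).trans ?_
          have h := Real.rpow_le_rpow_of_nonpos h2n hξ.1 (by linarith : 1 - α - β ≤ 0)
          exact mul_le_mul' (mul_le_mul' le_rfl (ENNReal.ofReal_le_ofReal h)) le_rfl
      _ ≤ ∫⁻ ξ in Metric.closedBall 0 (2 ^ (n + 1)),
            K * ENNReal.ofReal ((2 ^ n) ^ (1 - α - β)) * Q ξ := by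
          refine lintegral_mono_set fun ξ hξ => ?_
          rw [mem_closedBall_zero_iff, Real.norm_eq_abs]
          exact hξ.2
      _ = K * ENNReal.ofReal ((2 ^ n) ^ (1 - α - β)) *
            ∫⁻ ξ in Metric.closedBall 0 (2 ^ (n + 1)), Q ξ :=
          lintegral_const_mul' _ _ (ENNReal.mul_ne_top hK ENNReal.ofReal_ne_top)
      _ ≤ K * ENNReal.ofReal ((2 ^ n) ^ (1 - α - β)) *
            (D * ENNReal.ofReal ((2 ^ (n + 1)) ^ (1 - γ))) := by
          gcongr
          exact hQle _ (by positivity)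
      _ = _ := by
          have h1 : (2 : ℝ) ^ (1 - γ) * q ^ n
              = (2 ^ n) ^ (1 - α - β) * (2 ^ (n + 1)) ^ (1 - γ) := by
            rw [hq, pow_succ, Real.mul_rpow h2n.le (by norm_num), ← mul_assoc,
              ← Real.rpow_add h2n, mul_comm, ← Real.rpow_natCast, ← Real.rpow_natCast,
              ← Real.rpow_mul (by norm_num), ← Real.rpow_mul (by norm_num)]
            congr 2
            ring
          rw [h1, ENNReal.ofReal_mul (by positivity)]
          ring
  have hin : ∫⁻ ξ in Metric.closedBall 0 1, ‖V ξ‖ₑ ^ 2 < ∞ := by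
    have hb : ∀ ξ, ‖V ξ‖ₑ ^ 2
        ≤ ENNReal.ofReal ((ν.real Set.univ * τ.real Set.univ * μ.real Set.univ) ^ 2) := by
      intro ξ
      rw [← ofReal_norm, ← ENNReal.ofReal_pow (norm_nonneg _)]
      refine ENNReal.ofReal_le_ofReal (pow_le_pow_left₀ (norm_nonneg _) ?_ 2)
      refine norm_integral_le_of_norm_le_const (Filter.Eventually.of_forall fun a => ?_)
      rw [norm_mul]
      have h1 := norm_densityFourier_le (μ := ν) hone (a * ξ)
      have h2 := norm_densityFourier_le (μ := τ) hone (a * ξ)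
      rw [one_mul] at h1 h2
      gcongr
    refine (lintegral_mono hb).trans_lt ?_
    rw [lintegral_const, Measure.restrict_apply_univ, Real.volume_closedBall]
    exact ENNReal.mul_lt_top ENNReal.ofReal_lt_top ENNReal.ofReal_lt_top
  have hcover : (Set.univ : Set ℝ) ⊆ Metric.closedBall 0 1 ∪ ⋃ n, E n := by
    intro ξ _
    by_cases hξ : |ξ| ≤ 1
    · left
      rwa [mem_closedBall_zero_iff, Real.norm_eq_abs]
    · right
      obtain ⟨n, hn1, hn2⟩ := exists_nat_pow_near (not_le.1 hξ).le (one_lt_two (α := ℝ))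
      exact Set.mem_iUnion.2 ⟨n, hn1, hn2.le⟩
  have hsummable : Summable fun n : ℕ => (2 : ℝ) ^ (1 - γ) * q ^ n :=
    (summable_geometric_of_lt_one hq0.le hq1).mul_left _
  calc ∫⁻ ξ, ‖V ξ‖ₑ ^ 2 = ∫⁻ ξ in Set.univ, ‖V ξ‖ₑ ^ 2 := by rw [Measure.restrict_univ]
    _ ≤ ∫⁻ ξ in Metric.closedBall 0 1 ∪ ⋃ n, E n, ‖V ξ‖ₑ ^ 2 := lintegral_mono_set hcover
    _ ≤ (∫⁻ ξ in Metric.closedBall 0 1, ‖V ξ‖ₑ ^ 2) + ∫⁻ ξ in ⋃ n, E n, ‖V ξ‖ₑ ^ 2 :=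
        lintegral_union_le _ _ _
    _ ≤ (∫⁻ ξ in Metric.closedBall 0 1, ‖V ξ‖ₑ ^ 2) +
          ∑' n, K * D * ENNReal.ofReal (2 ^ (1 - γ) * q ^ n) := by
        gcongr
        exact (lintegral_iUnion_le _ _).trans (ENNReal.tsum_le_tsum hEle)
    _ < ∞ := by
        rw [ENNReal.tsum_mul_left, ← ENNReal.ofReal_tsum_of_nonneg (fun n => by positivity)
          hsummable]
        exact ENNReal.add_lt_top.2 ⟨hin, ENNReal.mul_lt_top
          (ENNReal.mul_ne_top hK hDtop).lt_top ENNReal.ofReal_lt_top⟩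

/-- A finite measure with square integrable Fourier transform gives no mass to compact Lebesgue
null sets. -/
theorem measure_eq_zero_of_lintegral_densityFourier_sq {ν : Measure ℝ} [IsFiniteMeasure ν]
    (hν : ∫⁻ ξ, ‖densityFourier ν 1 ξ‖ₑ ^ 2 < ∞) {T : Set ℝ} (hT : IsCompact T)
    (hT0 : volume T = 0) : ν T = 0 := by
  have hone : ∀ x : ℝ, ‖(1 : ℝ → ℂ) x‖ ≤ 1 := by simp
  have hVc : Continuous (densityFourier ν 1) := continuous_densityFourier measurable_one hone
  set D := ∫⁻ ξ, ‖densityFourier ν 1 ξ‖ₑ ^ 2 with hD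
  have key : ∀ ε : ℝ≥0∞, 0 < ε → ν T ^ 2 ≤ ε * D := by
    intro ε hε
    obtain ⟨U, hTU, hUo, hUε⟩ := T.exists_isOpen_lt_of_lt ε (by rwa [hT0])
    obtain ⟨L, hL⟩ := hT.isBounded.subset_ball 0
    have hWo : IsOpen (U ∩ Metric.ball 0 L) := hUo.inter Metric.isOpen_ball
    obtain ⟨φ, hφs, hφr, hφsupp, hφ1⟩ := exists_contMDiff_support_eq_eq_one_iff
      (modelWithCornersSelf ℝ ℝ) (n := ⊤) hWo hT.isClosed (Set.subset_inter hTU hL)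
    have hφ01 : ∀ x, φ x ∈ Set.Icc (0 : ℝ) 1 := fun x => hφr ⟨x, rfl⟩
    have hcs : HasCompactSupport fun x => (φ x : ℂ) := by
      refine HasCompactSupport.intro (isCompact_closedBall (0 : ℝ) L) fun x hx => ?_
      have : x ∉ Function.support φ := fun h => by
        rw [hφsupp] at h
        exact hx (Metric.ball_subset_closedBall h.2)
      simpa using this
    have hsm : ContDiff ℝ ((⊤ : ℕ∞) : WithTop ℕ∞) fun x => (φ x : ℂ) :=
      Complex.ofRealCLM.contDiff.comp hφs.contDiff
    let f : SchwartzMap ℝ ℂ := hcs.toSchwartzMap hsm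
    have hf : ∀ x, f x = φ x := fun x => rfl
    have hinv : ∀ x, (φ x : ℂ) = ∫ ξ, (𝐞 (ξ * x) : ℂ) * 𝓕 f ξ := fun x => by
      have h1 : 𝓕⁻ (𝓕 f) x = f x := by rw [FourierTransform.fourierInv_fourier_eq]
      rw [← hf, ← h1, SchwartzMap.fourierInv_coe, Real.fourierInv_eq]
      refine integral_congr_ae (Filter.Eventually.of_forall fun ξ => ?_)
      simp [Circle.smul_def, mul_comm]
    have hpair : ∫ x, (φ x : ℂ) ∂ν = ∫ ξ, 𝓕 f ξ * densityFourier ν 1 ξ := by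
      have hint : Integrable (Function.uncurry fun x ξ : ℝ => (𝐞 (ξ * x) : ℂ) * 𝓕 f ξ)
          (ν.prod volume) := by
        have h1 : Integrable (fun z : ℝ × ℝ => (1 : ℂ) * 𝓕 f z.2) (ν.prod volume) :=
          (integrable_const (1 : ℂ)).mul_prod (𝓕 f).integrable
        refine h1.mono ?_ (Filter.Eventually.of_forall fun z => ?_)
        · exact ((continuous_fourierChar_coe.comp (by fun_prop)).mul
            ((𝓕 f).continuous.comp continuous_snd)).aestronglyMeasurable
        · simp only [Function.uncurry, norm_mul, Circle.norm_coe, norm_one]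
          exact le_rfl
      simp_rw [hinv]
      rw [integral_integral_swap hint]
      refine integral_congr_ae (Filter.Eventually.of_forall fun ξ => ?_)
      simp only [densityFourier, Pi.one_apply, mul_one]
      rw [integral_mul_const, mul_comm]
    have hlow : ν T ≤ ‖∫ x, (φ x : ℂ) ∂ν‖ₑ := by
      have hφi : Integrable φ ν :=
        Integrable.of_bound hφs.continuous.aestronglyMeasurable 1
          (Filter.Eventually.of_forall fun x => by
            rw [Real.norm_eq_abs, abs_of_nonneg (hφ01 x).1]
            exact (hφ01 x).2)
      rw [integral_complex_ofReal, ← ofReal_norm, Complex.norm_real, Real.norm_eq_abs,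
        abs_of_nonneg (integral_nonneg fun x => (hφ01 x).1),
        ofReal_integral_eq_lintegral_ofReal hφi (Filter.Eventually.of_forall fun x => (hφ01 x).1),
        ← lintegral_indicator_one hT.measurableSet]
      refine lintegral_mono fun x => ?_
      by_cases hx : x ∈ T
      · simp [(hφ1 x).1 hx, hx]
      · simp [hx]
    have hplanch : ∫⁻ ξ, ‖𝓕 f ξ‖ₑ ^ 2 ≤ ε := by
      have hL2 : ∀ g : SchwartzMap ℝ ℂ, ∫⁻ ξ, ‖g ξ‖ₑ ^ 2 = ENNReal.ofReal (∫ ξ, ‖g ξ‖ ^ 2) := by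
        intro g
        have hgi : Integrable fun ξ => ‖g ξ‖ ^ 2 :=
          (g.memLp 2).integrable_norm_pow two_ne_zero
        rw [ofReal_integral_eq_lintegral_ofReal hgi
          (Filter.Eventually.of_forall fun x => by positivity)]
        refine lintegral_congr fun ξ => ?_
        rw [← ofReal_norm, ENNReal.ofReal_pow (norm_nonneg _)]
      rw [hL2, SchwartzMap.integral_norm_sq_fourier, ← hL2]
      refine le_trans ?_ hUε.le
      rw [← lintegral_indicator_one hUo.measurableSet]
      refine lintegral_mono fun x => ?_
      by_cases hx : x ∈ U
      · rw [Set.indicator_of_mem hx, hf, ← ofReal_norm, Complex.norm_real, Real.norm_eq_abs,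
          abs_of_nonneg (hφ01 x).1]
        exact pow_le_one' (ENNReal.ofReal_le_one.2 (hφ01 x).2) 2
      · have : x ∉ Function.support φ := fun h => by
          rw [hφsupp] at h
          exact hx h.1
        have h0 : φ x = 0 := by simpa using this
        simp [hf, h0]
    calc ν T ^ 2 ≤ (∫⁻ ξ, ‖𝓕 f ξ‖ₑ * ‖densityFourier ν 1 ξ‖ₑ) ^ 2 := by
          refine pow_le_pow_left' (hlow.trans ?_) 2
          rw [hpair]
          refine (enorm_integral_le_lintegral_enorm _).trans_eq ?_
          simp only [enorm_mul]
      _ ≤ (∫⁻ ξ, ‖𝓕 f ξ‖ₑ ^ 2) * D :=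
          sq_lintegral_mul_le (𝓕 f).continuous.measurable.enorm.aemeasurable
            hVc.measurable.enorm.aemeasurable
      _ ≤ ε * D := by gcongr
  have hlim : Filter.Tendsto (fun ε : ℝ≥0∞ => ε * D) (nhdsWithin 0 (Set.Ioi 0)) (nhds 0) := by
    have h1 := ENNReal.Tendsto.mul_const (b := D)
      (Filter.tendsto_id.mono_left (nhdsWithin_le_nhds (a := (0 : ℝ≥0∞)) (s := Set.Ioi 0)))
      (Or.inr hν.ne)
    simpa using h1
  have h2 : ν T ^ 2 ≤ 0 := ge_of_tendsto hlim (by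
    filter_upwards [self_mem_nhdsWithin] with ε hε using key ε hε)
  exact pow_eq_zero_iff two_ne_zero |>.1 (le_antisymm h2 zero_le)

/-- The law of `a * (b + c)` for independent `a`, `b`, `c`. -/
noncomputable def mulAddLaw (μ ν τ : Measure ℝ) : Measure ℝ :=
  (μ.prod (ν.prod τ)).map fun p => p.1 * (p.2.1 + p.2.2)

theorem densityFourier_mulAddLaw (μ ν τ : Measure ℝ) [IsFiniteMeasure μ] [IsFiniteMeasure ν]
    [IsFiniteMeasure τ] (ξ : ℝ) :
    densityFourier (mulAddLaw μ ν τ) 1 ξ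
      = ∫ a, densityFourier ν 1 (a * ξ) * densityFourier τ 1 (a * ξ) ∂μ := by
  have hcts : Continuous fun p : ℝ × ℝ × ℝ => (𝐞 (ξ * (p.1 * (p.2.1 + p.2.2))) : ℂ) * 1 :=
    (continuous_fourierChar_coe.comp (by fun_prop)).mul continuous_const
  have hcts' : Continuous fun x : ℝ => (𝐞 (ξ * x) : ℂ) * 1 :=
    (continuous_fourierChar_coe.comp (by fun_prop)).mul continuous_const
  simp only [densityFourier, Pi.one_apply]
  rw [mulAddLaw, integral_map (by fun_prop) hcts'.aestronglyMeasurable,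
    integral_prod _ (Integrable.of_bound hcts.aestronglyMeasurable 1
      (Filter.Eventually.of_forall fun p => by rw [mul_one, Circle.norm_coe]))]
  refine integral_congr_ae (Filter.Eventually.of_forall fun a => ?_)
  dsimp only
  rw [← integral_prod_mul]
  refine integral_congr_ae (Filter.Eventually.of_forall fun p => ?_)
  simp only [mul_one]
  rw [← Circle.coe_mul, ← AddChar.map_add_eq_mul]
  congr 2
  ring

theorem exists_real_lt_of_two_lt_add {a b c : ℝ≥0∞} (ha : a ≤ 1) (hb : b ≤ 1) (hc : c ≤ 1)
    (h : 2 < a + b + c) :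
    ∃ α β γ : NNReal, 0 < α ∧ 0 < β ∧ 0 < γ ∧ (α : ℝ≥0∞) < a ∧ (β : ℝ≥0∞) < b ∧ (γ : ℝ≥0∞) < c ∧
      2 < α + β + γ := by
  lift a to NNReal using ne_top_of_le_ne_top ENNReal.one_ne_top ha
  lift b to NNReal using ne_top_of_le_ne_top ENNReal.one_ne_top hb
  lift c to NNReal using ne_top_of_le_ne_top ENNReal.one_ne_top hc
  norm_cast at ha hb hc h
  have ha' : (a : ℝ) ≤ 1 := ha
  have hb' : (b : ℝ) ≤ 1 := hb
  have hc' : (c : ℝ) ≤ 1 := hc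
  have h' : (2 : ℝ) < a + b + c := by exact_mod_cast h
  set ε : ℝ := (a + b + c - 2) / 4 with hε
  obtain ⟨α, hα⟩ : ∃ α : NNReal, (α : ℝ) = a - ε := ⟨⟨a - ε, by linarith⟩, rfl⟩
  obtain ⟨β, hβ⟩ : ∃ β : NNReal, (β : ℝ) = b - ε := ⟨⟨b - ε, by linarith⟩, rfl⟩
  obtain ⟨γ, hγ⟩ : ∃ γ : NNReal, (γ : ℝ) = c - ε := ⟨⟨c - ε, by linarith⟩, rfl⟩
  refine ⟨α, β, γ, ?_, ?_, ?_, ?_, ?_, ?_, ?_⟩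
  · exact NNReal.coe_pos.1 (by linarith)
  · exact NNReal.coe_pos.1 (by linarith)
  · exact NNReal.coe_pos.1 (by linarith)
  · exact ENNReal.coe_lt_coe.2 (NNReal.coe_lt_coe.1 (by linarith))
  · exact ENNReal.coe_lt_coe.2 (NNReal.coe_lt_coe.1 (by linarith))
  · exact ENNReal.coe_lt_coe.2 (NNReal.coe_lt_coe.1 (by linarith))
  · refine NNReal.coe_lt_coe.1 ?_
    push_cast
    linarith

/-- Removing a small neighbourhood of the origin from a set of reals barely changes its
dimension. -/
theorem exists_lt_dimH_inter_abs_ge {A : Set ℝ} {α : ℝ≥0∞} (h : α < dimH A) :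
    ∃ δ > 0, α < dimH (A ∩ {a | δ ≤ |a|}) := by
  have hsub : A ⊆ {0} ∪ ⋃ n : ℕ, A ∩ {a | 1 / ((n : ℝ) + 1) ≤ |a|} := by
    intro a ha
    by_cases h0 : a = 0
    · exact Or.inl h0
    · obtain ⟨n, hn⟩ := exists_nat_one_div_lt (abs_pos.2 h0)
      exact Or.inr (Set.mem_iUnion.2 ⟨n, ha, hn.le⟩)
  have h1 := h.trans_le (dimH_mono hsub)
  rw [dimH_union, dimH_singleton, dimH_iUnion, max_eq_right zero_le, lt_iSup_iff] at h1
  obtain ⟨n, hn⟩ := h1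
  exact ⟨_, Nat.one_div_pos_of_nat, hn⟩

theorem exists_frostman_measure_of_lt_dimH {s : NNReal} (hs : 0 < s) {K : Set ℝ} (hK : IsCompact K)
    (h : (s : ℝ≥0∞) < dimH K) :
    ∃ μ : Measure ℝ, IsFiniteMeasure μ ∧ μ ≠ 0 ∧ (∀ᵐ x ∂μ, x ∈ K) ∧
      ∀ x r, 0 < r → μ (Metric.closedBall x r) ≤ ENNReal.ofReal (3 ^ (s : ℝ) * r ^ (s : ℝ)) :=
  exists_frostman_measure (NNReal.coe_pos.2 hs) hK (by simp [hausdorffMeasure_of_lt_dimH h])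

/-- **Continuous sum-product estimate on the line** (Corollary 1.6 of "Group actions,
the Mattila integral and applications"). If `A, B, C ⊆ ℝ` are compact with
`dim_H(A) + dim_H(B) + dim_H(C) > 2`, then `A(B+C) = { a(b+c) : a ∈ A, b ∈ B, c ∈ C }`
has positive Lebesgue measure. -/
theorem sum_product_line_pos_measure
    (A B C : Set ℝ) (hA : IsCompact A) (hB : IsCompact B) (hC : IsCompact C)
    (hdim : 2 < dimH A + dimH B + dimH C) :
    0 < volume {t : ℝ | ∃ a ∈ A, ∃ b ∈ B, ∃ c ∈ C, t = a * (b + c)} := by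
  have hle : ∀ S : Set ℝ, dimH S ≤ 1 := fun S =>
    (dimH_mono (Set.subset_univ S)).trans_eq Real.dimH_univ
  obtain ⟨α, β, γ, hα0, hβ0, hγ0, hα, hβ, hγ, hsum⟩ :=
    exists_real_lt_of_two_lt_add (hle A) (hle B) (hle C) hdim
  have hβ1 : (β : ℝ) ≤ 1 := by exact_mod_cast hβ.le.trans (hle B)
  have hγ1 : (γ : ℝ) ≤ 1 := by exact_mod_cast hγ.le.trans (hle C)
  obtain ⟨δ, hδ, hαδ⟩ := exists_lt_dimH_inter_abs_ge hα
  have hAδ : IsCompact (A ∩ {a | δ ≤ |a|}) :=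
    hA.inter_right (isClosed_le continuous_const continuous_abs)
  obtain ⟨μ, _, hμ0, hμA, hμ⟩ := exists_frostman_measure_of_lt_dimH hα0 hAδ hαδ
  obtain ⟨ν, _, hν0, hνB, hν⟩ := exists_frostman_measure_of_lt_dimH hβ0 hB hβ
  obtain ⟨τ, _, hτ0, hτC, hτ⟩ := exists_frostman_measure_of_lt_dimH hγ0 hC hγ
  obtain ⟨L, hL⟩ := (hA.union hB).isBounded.exists_norm_le
  have hL2 : ∫⁻ ξ, ‖densityFourier (mulAddLaw μ ν τ) 1 ξ‖ₑ ^ 2 < ∞ := by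
    simp_rw [densityFourier_mulAddLaw]
    exact lintegral_sq_integral_dilate_mul_lt_top (L := max L 1) hβ1 hγ1
      (by exact_mod_cast hsum) (by positivity) (by positivity) hδ (le_max_right _ _) hμ hν hτ
      (hμA.mono fun a ha => ha.2)
      (hμA.mono fun a ha => (hL a (Or.inl ha.1)).trans (le_max_left _ _))
      (hνB.mono fun b hb => (hL b (Or.inr hb)).trans (le_max_left _ _))
  have himage : {t : ℝ | ∃ a ∈ A, ∃ b ∈ B, ∃ c ∈ C, t = a * (b + c)}
      = Set.image (fun p : ℝ × ℝ × ℝ => p.1 * (p.2.1 + p.2.2)) (A ×ˢ B ×ˢ C) := by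
    ext t
    constructor
    · rintro ⟨a, ha, b, hb, c, hc, rfl⟩
      exact ⟨(a, b, c), ⟨ha, hb, hc⟩, rfl⟩
    · rintro ⟨⟨a, b, c⟩, ⟨ha, hb, hc⟩, rfl⟩
      exact ⟨a, ha, b, hb, c, hc, rfl⟩
  have hcompact : IsCompact {t : ℝ | ∃ a ∈ A, ∃ b ∈ B, ∃ c ∈ C, t = a * (b + c)} := by
    rw [himage]
    exact (hA.prod (hB.prod hC)).image (by fun_prop)
  have hmeas : Measurable fun p : ℝ × ℝ × ℝ => p.1 * (p.2.1 + p.2.2) := by fun_prop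
  have : IsFiniteMeasure (mulAddLaw μ ν τ) := by
    rw [mulAddLaw]
    infer_instance
  refine pos_iff_ne_zero.2 fun hzero => ?_
  have hnull := measure_eq_zero_of_lintegral_densityFourier_sq hL2 hcompact hzero
  rw [mulAddLaw, Measure.map_apply hmeas hcompact.measurableSet] at hnull
  have hprod : (μ.prod (ν.prod τ)) ((A ∩ {a | δ ≤ |a|}) ×ˢ (B ×ˢ C)) = 0 :=
    measure_mono_null (fun p hp => by
      exact ⟨p.1, hp.1.1, p.2.1, hp.2.1, p.2.2, hp.2.2, rfl⟩) hnull
  have hfull : ∀ {κ : Measure ℝ} {S : Set ℝ}, (∀ᵐ x ∂κ, x ∈ S) → κ S = κ Set.univ :=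
    fun h => measure_congr (Filter.eventuallyEq_univ.2 h)
  rw [Measure.prod_prod, Measure.prod_prod, hfull hμA, hfull hνB, hfull hτC] at hprod
  simp [hμ0, hν0, hτ0] at hprod
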